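/- Let σ_Z² > 0, let Z be a Gaussian random variable with mean 0 and variance σ_Z², and let a > 0. For j ∈ ℤ let I_j = [(j − 1/2)·a, (j + 1/2)·a). Then there exist constants c > 0 and a₀ > 0, depending only on σ_Z², such that for all a ≥ a₀·σ_Z, Σ_{j∈ℤ} j² · P[Z ∈ I_j] ≤ c · exp(−a²/(8σ_Z²)). -/

import Mathlib

open ProbabilityTheory NNReal

lemma aux_upper (v : ℝ≥0) (hv : 0 < v) (x : ℝ) (hx : 0 ≤ x) :
    (gaussianReal 0 v).real {z | x ≤ id z} ≤ Real.exp (-x ^ 2 / (2 * v)) := by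
  have hv' : (0 : ℝ) < v := hv
  have h := measure_ge_le_exp_mul_mgf (μ := gaussianReal 0 v) (X := id) x
    (t := x / v) (by positivity) (integrable_exp_mul_gaussianReal _)
  rw [mgf_id_gaussianReal] at h
  refine h.trans (le_of_eq ?_)
  simp only
  rw [← Real.exp_add]
  congr 1
  field_simp
  ring

lemma aux_lower (v : ℝ≥0) (hv : 0 < v) (x : ℝ) (hx : 0 ≤ x) :
    (gaussianReal 0 v).real {z | id z ≤ -x} ≤ Real.exp (-x ^ 2 / (2 * v)) := by
  have hv' : (0 : ℝ) < v := hv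
  have h := measure_le_le_exp_mul_mgf (μ := gaussianReal 0 v) (X := id) (-x)
    (t := -(x / v)) (by have : 0 ≤ x / v := by positivity
                        linarith) (integrable_exp_mul_gaussianReal _)
  rw [mgf_id_gaussianReal] at h
  refine h.trans (le_of_eq ?_)
  simp only
  rw [← Real.exp_add]
  congr 1
  field_simp
  ring

lemma aux_summable :
    Summable (fun j : ℤ => (j : ℝ) ^ 2 * Real.exp (-(|(j : ℝ)| - 1) / 2)) := by
  have h := (Real.summable_pow_mul_exp_neg_nat_mul 2 (r := 1 / 2) (by norm_num)).mul_right
    (Real.exp (1 / 2))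
  have e : ∀ n : ℕ, (n : ℝ) ^ 2 * Real.exp (-(1 / 2) * n) * Real.exp (1 / 2)
      = (n : ℝ) ^ 2 * Real.exp (-((n : ℝ) - 1) / 2) := by
    intro n
    rw [mul_assoc, ← Real.exp_add]
    congr 2
    ring
  simp only [e] at h
  apply Summable.of_nat_of_neg
  · simpa using h
  · simpa using h

lemma aux_exp (v a y : ℝ) (hv : 0 < v) (ha : v ≤ a ^ 2) (hy : 1 ≤ y) (hy2 : y = 1 ∨ 2 ≤ y) :
    Real.exp (-((y - 1 / 2) * a) ^ 2 / (2 * v))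
      ≤ Real.exp (-(y - 1) / 2) * Real.exp (-a ^ 2 / (8 * v)) := by
  rw [← Real.exp_add, Real.exp_le_exp]
  have h1 : 1 ≤ a ^ 2 / v := by rwa [one_le_div hv]
  have e1 : -((y - 1 / 2) * a) ^ 2 / (2 * v) = -((y - 1 / 2) ^ 2 / 2) * (a ^ 2 / v) := by
    field_simp
  have e2 : -a ^ 2 / (8 * v) = -(1 / 8) * (a ^ 2 / v) := by
    field_simp
  rw [e1, e2]
  have h2 : y - 1 ≤ y * (y - 1) := by nlinarith
  nlinarith [mul_nonneg (sub_nonneg.2 h1) (sub_nonneg.2 hy), mul_nonneg (sub_nonneg.2 h2)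
    (le_trans zero_le_one h1)]

lemma aux_term (v : ℝ≥0) (hv : 0 < v) (a : ℝ) (ha0 : 0 ≤ a) (ha : (v : ℝ) ≤ a ^ 2) (j : ℤ) :
    ((j : ℝ)) ^ 2 *
      ((gaussianReal 0 v) (Set.Ico (((j : ℝ) - 1 / 2) * a) (((j : ℝ) + 1 / 2) * a))).toReal
    ≤ (j : ℝ) ^ 2 * Real.exp (-(|(j : ℝ)| - 1) / 2) * Real.exp (-a ^ 2 / (8 * v)) := by
  have hv' : (0 : ℝ) < v := hv
  rw [mul_assoc]
  rcases lt_trichotomy j 0 with h | h | h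
  · have h1 : (j : ℝ) ≤ -1 := by exact_mod_cast (by omega : j ≤ -1)
    have h2 : -(j : ℝ) = 1 ∨ 2 ≤ -(j : ℝ) := by
      rcases (by omega : -j = 1 ∨ 2 ≤ -j) with h | h
      · left; exact_mod_cast h
      · right; exact_mod_cast h
    rw [abs_of_neg (by linarith)]
    refine mul_le_mul_of_nonneg_left ?_ (sq_nonneg _)
    refine le_trans ?_ (aux_exp v a (-j) hv' ha (by linarith) h2)
    refine le_trans ?_ (aux_lower v hv ((-j - 1 / 2) * a) (mul_nonneg (by linarith) ha0))
    refine MeasureTheory.measureReal_mono ?_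
    intro z hz
    have := hz.2
    simp only [id, Set.mem_ofPred_eq]
    linarith
  · simp [h]
  · have h1 : 1 ≤ (j : ℝ) := by exact_mod_cast h
    have h2 : (j : ℝ) = 1 ∨ 2 ≤ (j : ℝ) := by
      rcases (by omega : j = 1 ∨ 2 ≤ j) with h | h
      · left; exact_mod_cast h
      · right; exact_mod_cast h
    rw [abs_of_pos (by linarith)]
    refine mul_le_mul_of_nonneg_left ?_ (sq_nonneg _)
    refine le_trans ?_ (aux_exp v a j hv' ha h1 h2)
    refine le_trans ?_ (aux_upper v hv ((j - 1 / 2) * a) (mul_nonneg (by linarith) ha0))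
    refine MeasureTheory.measureReal_mono ?_
    intro z hz
    exact hz.1

/-- Lemma 2 of the paper: for a centered Gaussian `Z` of variance `σ_Z²` and
the intervals `I_j = [(j−1/2)a, (j+1/2)a)` of a uniform constellation of
spacing `a`, there are constants `c > 0` and `a₀ > 0` depending only on `σ_Z²`
such that for all `a ≥ a₀ σ_Z`,
`Σ_{j∈ℤ} j² P[Z ∈ I_j] ≤ c exp(−a²/(8 σ_Z²))`. -/
theorem stmt_11 (σZ2 : ℝ≥0) (hσZ2 : 0 < σZ2) :
    ∃ c > (0 : ℝ), ∃ a₀ > (0 : ℝ), ∀ a : ℝ, a₀ * Real.sqrt σZ2 ≤ a →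
      (∑' j : ℤ, ((j : ℝ)) ^ 2 *
          ((gaussianReal 0 σZ2) (Set.Ico (((j : ℝ) - 1 / 2) * a) (((j : ℝ) + 1 / 2) * a))).toReal)
        ≤ c * Real.exp (-a ^ 2 / (8 * σZ2)) := by
  have hv' : (0 : ℝ) < σZ2 := hσZ2
  have hnn : 0 ≤ ∑' j : ℤ, (j : ℝ) ^ 2 * Real.exp (-(|(j : ℝ)| - 1) / 2) :=
    tsum_nonneg fun j => by positivity
  refine ⟨(∑' j : ℤ, (j : ℝ) ^ 2 * Real.exp (-(|(j : ℝ)| - 1) / 2)) + 1, by linarith,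
    1, one_pos, fun a ha => ?_⟩
  rw [one_mul] at ha
  have ha0 : 0 ≤ a := (Real.sqrt_nonneg _).trans ha
  have ha2 : (σZ2 : ℝ) ≤ a ^ 2 := (Real.sqrt_le_left ha0).1 ha
  have hs := aux_summable.mul_right (Real.exp (-a ^ 2 / (8 * σZ2)))
  have hb := aux_term σZ2 hσZ2 a ha0 ha2
  have hs' := Summable.of_nonneg_of_le (fun j => by positivity) hb hs
  refine (hs'.tsum_le_tsum hb hs).trans ?_
  rw [_root_.tsum_mul_right]
  exact mul_le_mul_of_nonneg_right (by linarith) (Real.exp_pos _).le
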